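/- arXiv:2109.13889 — 4 statements merged into one kernel-verified Lean document; each statement's English description precedes it below -/
import Mathlib

section
/- (McAllester's PAC-Bayesian folk theorem; Theorem 1 of the paper.) For every sample size m ≥ 1 and every δ ∈ (0,1], with μ^{⊗m}-probability at least 1−δ over the draw of the sample z = (z_1,…,z_m) ∈ Z^m, every hypothesis h ∈ H with P_H(h) > 0 that is consistent with z satisfies R(h) ≤ (log(1/P_H(h)) + log(1/δ))/m. -/
open MeasureTheory

/-!
If a hypothesis `h` violates the bound, then `exp (-m * R h) < P h * δ`. Since `1 - r ≤ exp (-r)`,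
such an `h` is consistent with an independent sample of size `m` with probability at most
`(1 - R h) ^ m ≤ exp (-m * R h)`, hence less than `P h * δ`. A union bound weighted by the prior
bounds the total failure probability by `∑ h, P h * δ ≤ δ`.
-/

open Function (support)

section UnionBound

variable {Ω : Type*} [MeasurableSpace Ω] {ν : Measure Ω}

theorem measureReal_biUnion_support_le_tsum [IsFiniteMeasure ν] {ι : Type*} {s : ι → Set Ω}
    {f : ι → ℝ} (hf : Summable f) (hs : ∀ i ∈ support f, ν.real (s i) ≤ f i) :
    ν.real (⋃ i ∈ support f, s i) ≤ ∑' i, f i := by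
  have hf_nonneg (i : ι) : 0 ≤ f i := by
    by_cases hi : i ∈ support f
    · exact measureReal_nonneg.trans (hs i hi)
    · exact (Function.notMem_support.mp hi).ge
  refine ENNReal.toReal_le_of_le_ofReal (tsum_nonneg hf_nonneg) ?_
  calc ν (⋃ i ∈ support f, s i)
      ≤ ∑' i : support f, ν (s i) := measure_biUnion_le ν hf.countable_support s
    _ ≤ ∑' i : support f, ENNReal.ofReal (f i) :=
        ENNReal.tsum_le_tsum fun i ↦
          (ENNReal.le_ofReal_iff_toReal_le (measure_ne_top ν _) (hf_nonneg i)).mpr (hs i i.2)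
    _ ≤ ∑' i, ENNReal.ofReal (f i) :=
        ENNReal.tsum_comp_le_tsum_of_injective Subtype.val_injective _
    _ = ENNReal.ofReal (∑' i, f i) := (ENNReal.ofReal_tsum_of_nonneg hf_nonneg hf).symm

theorem one_sub_measureReal_compl_le [IsProbabilityMeasure ν] (s : Set Ω) :
    1 - ν.real sᶜ ≤ ν.real s := by
  have h_cover : ν.real (s ∪ sᶜ) ≤ ν.real s + ν.real sᶜ := measureReal_union_le s sᶜ
  rw [Set.union_compl_self, probReal_univ] at h_cover
  linarith

end UnionBound

theorem exp_neg_mul_lt_of_log_div_lt {p δ n r : ℝ} (hp : 0 < p) (hδ : 0 < δ) (hn : 0 < n)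
    (h : (Real.log (1 / p) + Real.log (1 / δ)) / n < r) : Real.exp (-(n * r)) < p * δ := by
  rw [← Real.lt_log_iff_exp_lt (mul_pos hp hδ), Real.log_mul hp.ne' hδ.ne']
  rw [div_lt_iff₀' hn, one_div, one_div, Real.log_inv, Real.log_inv] at h
  linarith

section IndependentSample

variable {ι : Type*} [Fintype ι]

theorem measureReal_pi_forall_notMem_le_exp {X : ι → Type*} [∀ i, MeasurableSpace (X i)]
    {μ : ∀ i, Measure (X i)} [∀ i, IsProbabilityMeasure (μ i)] {s : ∀ i, Set (X i)}
    (hs : ∀ i, NullMeasurableSet (s i) (μ i)) :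
    (Measure.pi μ).real {z | ∀ i, z i ∉ s i} ≤ Real.exp (-∑ i, (μ i).real (s i)) := by
  have h_box : {z : ∀ i, X i | ∀ i, z i ∉ s i} = Set.univ.pi fun i ↦ (s i)ᶜ := by
    ext z
    simp
  calc (Measure.pi μ).real {z | ∀ i, z i ∉ s i}
      = ∏ i, (μ i).real (s i)ᶜ := by
        simp only [h_box, Measure.real, Measure.pi_pi, ENNReal.toReal_prod]
    _ = ∏ i, (1 - (μ i).real (s i)) :=
        Finset.prod_congr rfl fun i _ ↦ probReal_compl_eq_one_sub₀ (hs i)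
    _ ≤ ∏ i, Real.exp (-(μ i).real (s i)) :=
        Finset.prod_le_prod (fun _ _ ↦ sub_nonneg.mpr measureReal_le_one)
          fun _ _ ↦ Real.one_sub_le_exp_neg _
    _ = Real.exp (-∑ i, (μ i).real (s i)) := by
        rw [← Real.exp_sum, Finset.sum_neg_distrib]

/-- The samples on which a hypothesis with error set `s`, prior mass `p` and risk `μ.real s` is
consistent although its risk exceeds the PAC-Bayesian bound at confidence level `1 - δ`. The sample
size is the cardinality of the index type `ι`. -/
def misleadingSamples (ι : Type*) [Fintype ι] {Z : Type*} [MeasurableSpace Z] (μ : Measure Z)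
    (s : Set Z) (p δ : ℝ) : Set (ι → Z) :=
  {z | (∀ i, z i ∉ s) ∧ (Real.log (1 / p) + Real.log (1 / δ)) / Fintype.card ι < μ.real s}

theorem measureReal_pi_misleadingSamples_le [Nonempty ι] {Z : Type*} [MeasurableSpace Z]
    {μ : Measure Z} [IsProbabilityMeasure μ] {s : Set Z} (hs : NullMeasurableSet s μ) {p δ : ℝ}
    (hp : 0 < p) (hδ : 0 < δ) :
    (Measure.pi fun _ : ι ↦ μ).real (misleadingSamples ι μ s p δ) ≤ p * δ := by
  by_cases h_risk : (Real.log (1 / p) + Real.log (1 / δ)) / Fintype.card ι < μ.real s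
  · calc (Measure.pi fun _ : ι ↦ μ).real (misleadingSamples ι μ s p δ)
        ≤ (Measure.pi fun _ : ι ↦ μ).real {z | ∀ i, z i ∉ s} :=
          measureReal_mono fun _ hz ↦ hz.1
      _ ≤ Real.exp (-∑ _ : ι, μ.real s) := measureReal_pi_forall_notMem_le_exp fun _ ↦ hs
      _ = Real.exp (-(Fintype.card ι * μ.real s)) := by
          rw [Finset.sum_const, Finset.card_univ, nsmul_eq_mul]
      _ ≤ p * δ :=
          (exp_neg_mul_lt_of_log_div_lt hp hδ (Nat.cast_pos.mpr Fintype.card_pos) h_risk).le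
  · have h_empty : misleadingSamples ι μ s p δ = ∅ :=
      Set.eq_empty_of_forall_notMem fun _ hz ↦ h_risk hz.2
    rw [h_empty, measureReal_empty]
    positivity

end IndependentSample

theorem pac_bayes_folk_theorem_general
    {Z : Type*} [MeasurableSpace Z] (μ : Measure Z) [IsProbabilityMeasure μ]
    {H : Type*} (P : H → ℝ) (hP0 : ∀ h, 0 ≤ P h) (hP : Summable P) (hP1 : ∑' h : H, P h ≤ 1)
    (E : H → Set Z) (hE : ∀ h, NullMeasurableSet (E h) μ)
    (m : ℕ) (hm : 1 ≤ m) (δ : ℝ) (hδ0 : 0 < δ) :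
    1 - δ ≤
      (Measure.pi fun _ : Fin m ↦ μ).real
        {z : Fin m → Z | ∀ h : H, 0 < P h → (∀ i, z i ∉ E h) →
          μ.real (E h) ≤ (Real.log (1 / P h) + Real.log (1 / δ)) / m} := by
  have : Nonempty (Fin m) := ⟨⟨0, hm⟩⟩
  set ν := Measure.pi fun _ : Fin m ↦ μ
  set good := {z : Fin m → Z | ∀ h : H, 0 < P h → (∀ i, z i ∉ E h) →
    μ.real (E h) ≤ (Real.log (1 / P h) + Real.log (1 / δ)) / m}
  let bad (h : H) := misleadingSamples (Fin m) μ (E h) (P h) δ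
  have h_support (h : H) : h ∈ support (P · * δ) ↔ 0 < P h := by
    rw [Function.mem_support, mul_ne_zero_iff_right hδ0.ne', (hP0 h).lt_iff_ne']
  have h_compl : goodᶜ = ⋃ h ∈ support (P · * δ), bad h := by
    ext z
    simp only [good, bad, misleadingSamples, Fintype.card_fin, Set.mem_compl_iff,
      Set.mem_ofPred_eq, not_forall, not_le, Set.mem_iUnion, h_support, exists_prop]
  have h_bad (h : H) (hh : h ∈ support (P · * δ)) : ν.real (bad h) ≤ P h * δ :=
    measureReal_pi_misleadingSamples_le (hE h) ((h_support h).mp hh) hδ0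
  have h_fail : ν.real goodᶜ ≤ δ := calc
    ν.real goodᶜ = ν.real (⋃ h ∈ support (P · * δ), bad h) := by rw [h_compl]
    _ ≤ ∑' h, P h * δ := measureReal_biUnion_support_le_tsum (hP.mul_right δ) h_bad
    _ = (∑' h, P h) * δ := tsum_mul_right
    _ ≤ δ := mul_le_of_le_one_left hδ0.le hP1
  exact (sub_le_sub_left h_fail 1).trans (one_sub_measureReal_compl_le good)

/-- McAllester's PAC-Bayesian folk theorem (Theorem 1).
`Z` is the space of labelled examples with probability measure `μ`; `H` is a countable
hypothesis space with prior pmf `P`; `E h` is the (measurable) error set of hypothesis `h`,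
so the risk is `R h = (μ (E h)).toReal`.  With probability at least `1 - δ` over an iid
sample `z : Fin m → Z` drawn from the product measure, every hypothesis `h` of positive
prior mass that is consistent with the sample satisfies
`R h ≤ (log (1 / P h) + log (1 / δ)) / m`. -/
theorem pac_bayes_folk_theorem
    {Z : Type*} [MeasurableSpace Z] (μ : Measure Z) [IsProbabilityMeasure μ]
    {H : Type*} [Countable H]
    (P : H → ℝ) (hP0 : ∀ h, 0 ≤ P h) (hP1 : ∑' h : H, P h = 1)
    (E : H → Set Z) (hE : ∀ h, MeasurableSet (E h))
    (m : ℕ) (hm : 1 ≤ m) (δ : ℝ) (hδ0 : 0 < δ) (hδ1 : δ ≤ 1) :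
    1 - δ ≤
      ((Measure.pi fun _ : Fin m => μ)
        {z : Fin m → Z | ∀ h : H, 0 < P h → (∀ i, z i ∉ E h) →
          (μ (E h)).toReal ≤ (Real.log (1 / P h) + Real.log (1 / δ)) / m}).toReal := by
  have hP : Summable P :=
    not_imp_comm.mp tsum_eq_zero_of_not_summable (hP1.trans_ne one_ne_zero)
  exact pac_bayes_folk_theorem_general μ P hP0 hP hP1.le E (fun h ↦ (hE h).nullMeasurableSet)
    m hm δ hδ0
end

section
/- (Agnostic PAC-Bayesian bound; Theorem 2 of the paper.) For every sample size m ≥ 1 and every δ ∈ (0,1], with μ^{⊗m}-probability at least 1−δ over the draw of the sample z = (z_1,…,z_m) ∈ Z^m, every hypothesis h ∈ H with P_H(h) > 0 satisfies R(h) ≤ R_emp(h,z) + sqrt((log(1/P_H(h)) + log(1/δ))/(2m)). -/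
open MeasureTheory

/-!
For a fixed hypothesis `h` of prior mass `P h`, Hoeffding's inequality bounds by `P h * δ` the
probability that the risk exceeds the empirical risk by more than
`√(log (1 / (P h * δ)) / (2 * m))`: the hypotheses share the failure probability `δ` in proportion
to their prior mass.  A union bound over the support of the prior, which is countable because the
prior is summable, leaves a total failure probability of at most `δ`.
-/

open ProbabilityTheory Real
open scoped ENNReal

section UnionBound

variable {Ω κ : Type*} {mΩ : MeasurableSpace Ω}

lemma measure_biUnion_support_le_tsum (μ : Measure Ω) {w : κ → ℝ≥0∞} {B : κ → Set Ω}
    (hB : ∀ k ∈ w.support, μ (B k) ≤ w k) :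
    μ (⋃ k ∈ w.support, B k) ≤ ∑' k, w k := by
  by_cases hw : ∑' k, w k = ∞
  · simp [hw]
  calc μ (⋃ k ∈ w.support, B k)
      ≤ ∑' k : w.support, μ (B k) :=
        measure_biUnion_le μ (Summable.countable_support_ennreal hw) B
    _ ≤ ∑' k : w.support, w k := ENNReal.tsum_le_tsum fun k ↦ hB k k.2
    _ = ∑' k, w k := tsum_subtype_support w

lemma measureReal_setOf_exists_pos_le_tsum {μ : Measure Ω} [IsFiniteMeasure μ] {w : κ → ℝ}
    (hw0 : ∀ k, 0 ≤ w k) (hw : Summable w) {p : κ → Ω → Prop}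
    (hp : ∀ k, 0 < w k → μ.real {ω | p k ω} ≤ w k) :
    μ.real {ω | ∃ k, 0 < w k ∧ p k ω} ≤ ∑' k, w k := by
  have hunion : {ω | ∃ k, 0 < w k ∧ p k ω} =
      ⋃ k ∈ (fun k ↦ ENNReal.ofReal (w k)).support, {ω | p k ω} := by
    ext ω
    simp
  refine ENNReal.toReal_le_of_le_ofReal (tsum_nonneg hw0) ?_
  rw [hunion, ENNReal.ofReal_tsum_of_nonneg hw0 hw]
  refine measure_biUnion_support_le_tsum μ fun k hk ↦ ?_
  have hk : 0 < w k := by simpa using hk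
  exact (ENNReal.le_ofReal_iff_toReal_le (measure_ne_top _ _) hk.le).2 (hp k hk)

lemma one_sub_tsum_le_measureReal_setOf_forall_pos {μ : Measure Ω} [IsProbabilityMeasure μ]
    {w : κ → ℝ} (hw0 : ∀ k, 0 ≤ w k) (hw : Summable w) {p : κ → Ω → Prop}
    (hp : ∀ k, 0 < w k → μ.real {ω | ¬ p k ω} ≤ w k) :
    1 - ∑' k, w k ≤ μ.real {ω | ∀ k, 0 < w k → p k ω} := by
  have hcover : {ω | ∀ k, 0 < w k → p k ω} ∪ {ω | ∃ k, 0 < w k ∧ ¬ p k ω} = Set.univ := by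
    ext ω
    simp only [Set.mem_union, Set.mem_ofPred_eq, Set.mem_univ, iff_true]
    grind
  rw [sub_le_iff_le_add]
  calc (1 : ℝ)
      = μ.real ({ω | ∀ k, 0 < w k → p k ω} ∪ {ω | ∃ k, 0 < w k ∧ ¬ p k ω}) := by
        rw [hcover, probReal_univ]
    _ ≤ μ.real {ω | ∀ k, 0 < w k → p k ω} + μ.real {ω | ∃ k, 0 < w k ∧ ¬ p k ω} :=
        measureReal_union_le _ _
    _ ≤ μ.real {ω | ∀ k, 0 < w k → p k ω} + ∑' k, w k := by
        gcongr
        exact measureReal_setOf_exists_pos_le_tsum hw0 hw hp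

end UnionBound

lemma measureReal_le_sum_integral_sub_le_exp {Ω ι : Type*} {mΩ : MeasurableSpace Ω}
    {μ : Measure Ω} [IsProbabilityMeasure μ] {X : ι → Ω → ℝ} (hindep : iIndepFun X μ)
    {s : Finset ι} {a b : ι → ℝ} (hX : ∀ i ∈ s, AEMeasurable (X i) μ)
    (hab : ∀ i ∈ s, ∀ᵐ ω ∂μ, X i ω ∈ Set.Icc (a i) (b i)) {ε : ℝ} (hε : 0 ≤ ε) :
    μ.real {ω | ε ≤ ∑ i ∈ s, (μ[X i] - X i ω)} ≤
      exp (-(2 * ε ^ 2) / ∑ i ∈ s, (b i - a i) ^ 2) := by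
  have hsub : ∀ i ∈ s,
      HasSubgaussianMGF (fun ω ↦ μ[X i] - X i ω) ((‖b i - a i‖₊ / 2) ^ 2) μ := fun i hi ↦ by
    simpa [Pi.neg_def] using (hasSubgaussianMGF_of_mem_Icc (hX i hi) (hab i hi)).neg
  have hindep' : iIndepFun (fun i ω ↦ μ[X i] - X i ω) μ :=
    hindep.comp (fun i x ↦ (∫ ω, X i ω ∂μ) - x) fun _ ↦ measurable_const.sub measurable_id
  have hvar : ((∑ i ∈ s, (‖b i - a i‖₊ / 2) ^ 2 : NNReal) : ℝ) =
      (∑ i ∈ s, (b i - a i) ^ 2) / 4 := by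
    push_cast
    rw [Finset.sum_div]
    exact Finset.sum_congr rfl fun i _ ↦ by rw [div_pow, norm_eq_abs, sq_abs]; norm_num
  refine (HasSubgaussianMGF.measure_sum_ge_le_of_iIndepFun hindep' hsub hε).trans_eq ?_
  rw [hvar]
  congr 1
  ring

section EmpiricalRisk

variable {Z : Type*} {m : ℕ}

/-- The empirical risk `R_emp` of a hypothesis with loss function `ℓ` on the sample `z`: the mean
of the losses of the `m` examples.  For the zero-one loss, `ℓ` is the indicator function of the
error set. -/
noncomputable def empiricalRisk (ℓ : Z → ℝ) (z : Fin m → Z) : ℝ := (∑ i, ℓ (z i)) / m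

variable [MeasurableSpace Z] {μ : Measure Z} [IsProbabilityMeasure μ] {ℓ : Z → ℝ}

lemma measureReal_empiricalRisk_add_lt_integral_le_exp (hℓ : AEMeasurable ℓ μ)
    (hℓ01 : ∀ᵐ z ∂μ, ℓ z ∈ Set.Icc 0 1) (hm : m ≠ 0) {ε : ℝ} (hε : 0 ≤ ε) :
    (Measure.pi fun _ : Fin m ↦ μ).real {z | empiricalRisk ℓ z + ε < μ[ℓ]} ≤
      exp (-(2 * m * ε ^ 2)) := by
  set ν := Measure.pi fun _ : Fin m ↦ μ
  have hm0 : (0 : ℝ) < m := by positivity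
  have heval (i : Fin m) : MeasurePreserving (Function.eval i) ν μ :=
    measurePreserving_eval (fun _ ↦ μ) i
  have hmean (i : Fin m) : ∫ z, ℓ (z i) ∂ν = μ[ℓ] :=
    integral_comp_eval (μ := fun _ : Fin m ↦ μ) hℓ.aestronglyMeasurable
  have hdeviation : {z : Fin m → Z | empiricalRisk ℓ z + ε < μ[ℓ]} ⊆
      {z | m * ε ≤ ∑ i, (∫ z, ℓ (z i) ∂ν - ℓ (z i))} := fun z hz ↦ by
    have hz : (∑ i, ℓ (z i)) / m < μ[ℓ] - ε := lt_sub_iff_add_lt.2 hz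
    rw [div_lt_iff₀ hm0] at hz
    simp only [Set.mem_ofPred_eq, hmean, Finset.sum_sub_distrib, Finset.sum_const,
      Finset.card_univ, Fintype.card_fin, nsmul_eq_mul]
    linarith
  calc ν.real {z | empiricalRisk ℓ z + ε < μ[ℓ]}
      ≤ ν.real {z | m * ε ≤ ∑ i, (∫ z, ℓ (z i) ∂ν - ℓ (z i))} := measureReal_mono hdeviation
    _ ≤ exp (-(2 * (m * ε) ^ 2) / ∑ _i : Fin m, (1 - 0) ^ 2) :=
        measureReal_le_sum_integral_sub_le_exp (iIndepFun_pi fun _ ↦ hℓ)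
          (fun i _ ↦ hℓ.comp_quasiMeasurePreserving (heval i).quasiMeasurePreserving)
          (fun i _ ↦ (heval i).quasiMeasurePreserving.ae hℓ01) (by positivity)
    _ = exp (-(2 * m * ε ^ 2)) := by
        congr 1
        simp only [sub_zero, one_pow, Finset.sum_const, Finset.card_univ, Fintype.card_fin,
          nsmul_eq_mul, mul_one]
        field_simp

lemma measureReal_empiricalRisk_add_sqrt_log_lt_integral_le (hℓ : AEMeasurable ℓ μ)
    (hℓ01 : ∀ᵐ z ∂μ, ℓ z ∈ Set.Icc 0 1) (hm : m ≠ 0) {δ : ℝ} (hδ0 : 0 < δ) (hδ1 : δ ≤ 1) :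
    (Measure.pi fun _ : Fin m ↦ μ).real
      {z | empiricalRisk ℓ z + √(log (1 / δ) / (2 * m)) < μ[ℓ]} ≤ δ := by
  have hlog : 0 ≤ log (1 / δ) := log_nonneg (one_le_one_div hδ0 hδ1)
  refine (measureReal_empiricalRisk_add_lt_integral_le_exp hℓ hℓ01 hm (sqrt_nonneg _)).trans_eq ?_
  rw [sq_sqrt (by positivity), mul_div_cancel₀ _ (by positivity), one_div, log_inv, neg_neg,
    exp_log hδ0]

end EmpiricalRisk

theorem pac_bayes_agnostic_theorem_general
    {Z : Type*} [MeasurableSpace Z] {μ : Measure Z} [IsProbabilityMeasure μ]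
    {H : Type*} {P : H → ℝ} (hP0 : ∀ h, 0 ≤ P h) (hP : Summable P) (hP1 : ∑' h, P h ≤ 1)
    {ℓ : H → Z → ℝ} (hℓ : ∀ h, AEMeasurable (ℓ h) μ)
    (hℓ01 : ∀ h, ∀ᵐ z ∂μ, ℓ h z ∈ Set.Icc 0 1)
    {m : ℕ} (hm : m ≠ 0) {δ : ℝ} (hδ0 : 0 < δ) (hδ1 : δ ≤ 1) :
    1 - δ ≤ (Measure.pi fun _ : Fin m ↦ μ).real
      {z | ∀ h, 0 < P h →
        μ[ℓ h] ≤ empiricalRisk (ℓ h) z + √((log (1 / P h) + log (1 / δ)) / (2 * m))} := by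
  have hPle (h : H) : P h ≤ 1 := (hP.le_tsum h fun k _ ↦ hP0 k).trans hP1
  have hfail (h : H) (hPh : 0 < P h * δ) :
      (Measure.pi fun _ : Fin m ↦ μ).real {z | ¬ μ[ℓ h] ≤
        empiricalRisk (ℓ h) z + √((log (1 / P h) + log (1 / δ)) / (2 * m))} ≤ P h * δ := by
    have hPh0 : 0 < P h := pos_of_mul_pos_left hPh hδ0.le
    have hlog : log (1 / P h) + log (1 / δ) = log (1 / (P h * δ)) := by
      rw [← log_mul (by positivity) (by positivity), one_div_mul_one_div]
    simpa only [hlog, not_le] using measureReal_empiricalRisk_add_sqrt_log_lt_integral_le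
      (hℓ h) (hℓ01 h) hm hPh (mul_le_one₀ (hPle h) hδ0.le hδ1)
  calc 1 - δ ≤ 1 - ∑' h, P h * δ := by
        rw [tsum_mul_right]
        gcongr
        exact mul_le_of_le_one_left hδ0.le hP1
    _ ≤ _ := one_sub_tsum_le_measureReal_setOf_forall_pos (fun h ↦ mul_nonneg (hP0 h) hδ0.le)
        (hP.mul_right δ) hfail
    _ = _ := by simp only [mul_pos_iff_of_pos_right hδ0]

/-- Agnostic PAC-Bayesian bound (Theorem 2).
Setup as in Theorem 1; the empirical risk of `h` on the sample `z` is
`(∑ i, indicator of (E h) at z i) / m`.  With probability at least `1 - δ` over the sample,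
every hypothesis `h` of positive prior mass satisfies
`R h ≤ R_emp h z + sqrt ((log (1 / P h) + log (1 / δ)) / (2 m))`. -/
theorem pac_bayes_agnostic_theorem
    {Z : Type*} [MeasurableSpace Z] (μ : Measure Z) [IsProbabilityMeasure μ]
    {H : Type*} [Countable H]
    (P : H → ℝ) (hP0 : ∀ h, 0 ≤ P h) (hP1 : ∑' h : H, P h = 1)
    (E : H → Set Z) (hE : ∀ h, MeasurableSet (E h))
    (m : ℕ) (hm : 1 ≤ m) (δ : ℝ) (hδ0 : 0 < δ) (hδ1 : δ ≤ 1) :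
    1 - δ ≤
      ((Measure.pi fun _ : Fin m => μ)
        {z : Fin m → Z | ∀ h : H, 0 < P h →
          (μ (E h)).toReal ≤
            (∑ i, (E h).indicator (fun _ => (1 : ℝ)) (z i)) / m +
              Real.sqrt ((Real.log (1 / P h) + Real.log (1 / δ)) / (2 * m))}).toReal := by
  have hP : Summable P := by_contra fun hP ↦ by simp [tsum_eq_zero_of_not_summable hP] at hP1
  simpa [empiricalRisk, Measure.real, integral_indicator_const, hE] using
    pac_bayes_agnostic_theorem_general (ℓ := fun h ↦ (E h).indicator fun _ ↦ 1) hP0 hP hP1.le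
      (fun h ↦ (measurable_const.indicator (hE h)).aemeasurable)
      (fun h ↦ .of_forall fun z ↦ by by_cases hz : z ∈ E h <;> simp [hz])
      (Nat.one_le_iff_ne_zero.1 hm) hδ0 hδ1
end

section
/- (Pointwise convergence of the Parzen-window kernel classifier to the 1-NN classifier.) Let (X, d) be a metric space, let x_1, …, x_m ∈ X be training points with labels y_1, …, y_m ∈ {−1,+1}, and let x ∈ X be a point admitting a unique nearest training point, i.e. there is an index j* such that d(x, x_{j*}) < d(x, x_i) for all i ≠ j*. Then there exists σ_0 > 0 such that for all σ with 0 < σ < σ_0, the sum Σ_{i=1}^m y_i·exp(−d(x, x_i)²/σ²) has the same (nonzero) sign as y_{j*}. In particular, lim_{σ→0⁺} sign(Σ_{i=1}^m y_i·exp(−d(x,x_i)²/σ²)) = y_{j*} = NN_1(x), the 1-nearest-neighbour prediction at x. -/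
open Filter

/-!
Every summand `yᵢ exp (-dᵢ² / σ²)` with `dᵢ > dⱼ` is negligible relative to the `j`-th one, since
the difference of the exponents, `(dᵢ² - dⱼ²) / σ²`, tends to `+∞`. Hence the sum is asymptotically
equivalent to its `j`-th term, and equivalent functions eventually have the same sign.
-/

open Asymptotics Topology

theorem real_sign_mul_of_pos {a : ℝ} (ha : 0 < a) (b : ℝ) :
    Real.sign (a * b) = Real.sign b := by
  simp only [Real.sign, ← smul_eq_mul, smul_neg_iff_of_pos_left ha, smul_pos_iff_of_pos_left ha]

theorem eventually_sign_eq_of_isEquivalent {α : Type*} {l : Filter α} {u v : α → ℝ}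
    (h : u ~[l] v) : ∀ᶠ t in l, Real.sign (u t) = Real.sign (v t) := by
  obtain ⟨φ, hφ, huv⟩ := h.exists_pos_eq_mul
  filter_upwards [hφ, huv] with t hφt huvt
  rw [huvt, Pi.mul_apply, real_sign_mul_of_pos hφt]

theorem sum_isEquivalent_of_isLittleO {α ι E : Type*} [NormedAddCommGroup E] {l : Filter α}
    {s : Finset ι} {j : ι} (hj : j ∈ s) {u : ι → α → E}
    (h : ∀ i ∈ s, i ≠ j → u i =o[l] u j) : (fun t ↦ ∑ i ∈ s, u i t) ~[l] u j := by
  classical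
  have hrest : (fun t ↦ ∑ i ∈ s.erase j, u i t) =o[l] u j :=
    IsLittleO.fun_sum fun i hi ↦ h i (Finset.mem_of_mem_erase hi) (Finset.ne_of_mem_erase hi)
  have hsplit : (fun t ↦ ∑ i ∈ s, u i t) = u j + fun t ↦ ∑ i ∈ s.erase j, u i t :=
    funext fun t ↦ (Finset.add_sum_erase s (u · t) hj).symm
  rw [hsplit]
  exact IsEquivalent.refl.add_isLittleO hrest

theorem tendsto_const_div_even_pow_nhdsNE_zero_atTop {c : ℝ} (hc : 0 < c) {n : ℕ} (hn : Even n)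
    (hn0 : n ≠ 0) : Tendsto (fun t : ℝ ↦ c / t ^ n) (𝓝[≠] 0) atTop := by
  have hinv : Tendsto (fun t : ℝ ↦ ‖t⁻¹‖ ^ n) (𝓝[≠] 0) atTop :=
    (tendsto_pow_atTop hn0).comp tendsto_norm_inv_nhdsNE_zero_atTop
  simpa only [div_eq_mul_inv, Real.norm_eq_abs, hn.pow_abs, inv_pow] using hinv.const_mul_atTop hc

theorem isLittleO_exp_div_even_pow {a b : ℝ} (hab : a < b) {n : ℕ} (hn : Even n) (hn0 : n ≠ 0) :
    (fun t : ℝ ↦ Real.exp (a / t ^ n)) =o[𝓝[≠] 0] fun t ↦ Real.exp (b / t ^ n) := by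
  rw [Real.isLittleO_exp_comp_exp_comp]
  simpa only [sub_div] using
    tendsto_const_div_even_pow_nhdsNE_zero_atTop (sub_pos.2 hab) hn hn0

/-- The Gaussian-weighted vote `∑ᵢ yᵢ exp (-d(x₀, xᵢ)² / σ²)` at `x0`, whose sign is the prediction
of the Parzen-window classifier of bandwidth `σ`. At `σ = 0`, where Lean's division gives `0`, it is
the unweighted sum of the labels. -/
noncomputable def parzenScore {X ι : Type*} [Dist X] [Fintype ι] (x : ι → X) (y : ι → ℝ) (x0 : X)
    (σ : ℝ) : ℝ :=
  ∑ i, y i * Real.exp (-(dist x0 (x i)) ^ 2 / σ ^ 2)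

section Parzen

variable {X ι : Type*} [PseudoMetricSpace X] [Fintype ι] {x : ι → X} {y : ι → ℝ} {x0 : X} {j : ι}

theorem parzenScore_isEquivalent (hyj : y j ≠ 0)
    (hj : ∀ i, i ≠ j → dist x0 (x j) < dist x0 (x i)) :
    parzenScore x y x0 ~[𝓝[≠] 0] fun σ ↦ y j * Real.exp (-(dist x0 (x j)) ^ 2 / σ ^ 2) := by
  refine sum_isEquivalent_of_isLittleO (Finset.mem_univ j)
    (u := fun i σ ↦ y i * Real.exp (-(dist x0 (x i)) ^ 2 / σ ^ 2)) fun i _ hij ↦ ?_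
  have hsq : dist x0 (x j) ^ 2 < dist x0 (x i) ^ 2 :=
    pow_lt_pow_left₀ (hj i hij) dist_nonneg two_ne_zero
  have hexp := isLittleO_exp_div_even_pow (neg_lt_neg hsq) even_two two_ne_zero
  exact (hexp.const_mul_left (y i)).const_mul_right hyj

theorem eventually_sign_parzenScore_eq (hyj : y j ≠ 0)
    (hj : ∀ i, i ≠ j → dist x0 (x j) < dist x0 (x i)) :
    ∀ᶠ σ in 𝓝[≠] 0, Real.sign (parzenScore x y x0 σ) = Real.sign (y j) := by
  filter_upwards [eventually_sign_eq_of_isEquivalent (parzenScore_isEquivalent hyj hj)] with σ hσ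
  rw [hσ, mul_comm, real_sign_mul_of_pos (Real.exp_pos _)]

end Parzen

theorem parzen_to_one_nn_pointwise_general
    {X ι : Type*} [PseudoMetricSpace X] [Fintype ι] (x : ι → X) (y : ι → ℝ) (x0 : X) (j : ι)
    (hyj : y j ≠ 0) (hj : ∀ i, i ≠ j → dist x0 (x j) < dist x0 (x i)) :
    (∃ σ0 > (0 : ℝ), ∀ σ : ℝ, 0 < σ → σ < σ0 →
      Real.sign (parzenScore x y x0 σ) = Real.sign (y j)) ∧
    Tendsto (fun σ ↦ Real.sign (parzenScore x y x0 σ)) (𝓝[>] 0) (𝓝 (Real.sign (y j))) := by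
  have hsign := (eventually_sign_parzenScore_eq hyj hj).filter_mono (nhdsGT_le_nhdsNE 0)
  obtain ⟨σ0, hσ0, hsub⟩ := mem_nhdsGT_iff_exists_Ioo_subset.1 hsign
  exact ⟨⟨σ0, hσ0, fun σ hpos hlt ↦ hsub ⟨hpos, hlt⟩⟩, tendsto_nhds_of_eventually_eq hsign⟩

/-- Pointwise convergence of the Parzen-window kernel classifier to the 1-NN classifier.
If `x0` has a unique nearest training point `x j`, then for all sufficiently small
bandwidths `σ > 0` the sum `∑ i, y i * exp (-(dist x0 (x i))² / σ²)` has the same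
(nonzero) sign as `y j`; in particular the sign tends to `y j = NN₁(x0)` as `σ → 0⁺`. -/
theorem parzen_to_one_nn_pointwise
    {X : Type*} [MetricSpace X] (m : ℕ) (x : Fin m → X) (y : Fin m → ℝ)
    (hy : ∀ i, y i = -1 ∨ y i = 1) (x0 : X) (j : Fin m)
    (hj : ∀ i, i ≠ j → dist x0 (x j) < dist x0 (x i)) :
    (∃ σ0 > (0 : ℝ), ∀ σ : ℝ, 0 < σ → σ < σ0 →
      Real.sign (∑ i, y i * Real.exp (-(dist x0 (x i)) ^ 2 / σ ^ 2)) = y j) ∧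
    Tendsto (fun σ : ℝ =>
        Real.sign (∑ i, y i * Real.exp (-(dist x0 (x i)) ^ 2 / σ ^ 2)))
      (nhdsWithin 0 (Set.Ioi 0)) (nhds (y j)) := by
  have hyj : y j ≠ 0 ∧ Real.sign (y j) = y j := by
    rcases hy j with h | h <;> simp [h, Real.sign_neg]
  simpa only [parzenScore, hyj.2] using parzen_to_one_nn_pointwise_general x y x0 j hyj.1 hj
end

section
/- (Convergence of the risk of the Parzen-window classifier to the risk of 1-NN.) Let (X, d) be a metric space equipped with its Borel σ-algebra, let P be a probability measure on X × {−1,+1}, and let x_1, …, x_m ∈ X be training points with labels y_1, …, y_m ∈ {−1,+1}. Assume that for P-almost every (x, y), the point x has a unique nearest training point, i.e. there is a (then unique) index j*(x) with d(x, x_{j*(x)}) < d(x, x_i) for all i ≠ j*(x). Define ĥ_σ(x) = sign(Σ_{i=1}^m y_i·exp(−d(x,x_i)²/σ²)) and NN_1(x) = y_{j*(x)}. Then lim_{σ→0⁺} P({(x,y) : ĥ_σ(x) ≠ y}) = P({(x,y) : NN_1(x) ≠ y}). -/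
open Filter MeasureTheory

/-! After multiplication by `exp (d(z, x_k)² / σ²)`, where `x_k` is the nearest training point to
`z`, the `k`-th term of the kernel sum is `y_k`, while every other term is
`y_i exp (-(d(z, x_i)² - d(z, x_k)²) / σ²)`, which vanishes as `σ → 0⁺`. A positive factor does not
change the sign, so the kernel classifier agrees with the nearest-neighbour classifier at `z` as
soon as `σ` is small enough. This holds at almost every `z`, and dominated convergence turns it into
convergence of the risks. -/

open scoped Topology

section Sign

theorem sign_mul_of_pos_left {r : ℝ} (hr : 0 < r) (s : ℝ) :
    Real.sign (r * s) = Real.sign s := by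
  rcases lt_trichotomy s 0 with hs | rfl | hs
  · rw [Real.sign_of_neg hs, Real.sign_of_neg (mul_neg_of_pos_of_neg hr hs)]
  · rw [mul_zero]
  · rw [Real.sign_of_pos hs, Real.sign_of_pos (mul_pos hr hs)]

theorem eventually_sign_eq_of_tendsto {α : Type*} {l : Filter α} {f : α → ℝ} {c : ℝ}
    (hf : Tendsto f l (𝓝 c)) (hc : c ≠ 0) : ∀ᶠ a in l, Real.sign (f a) = Real.sign c := by
  rcases hc.lt_or_gt with hc | hc
  · filter_upwards [hf.eventually_lt_const hc] with a ha
    rw [Real.sign_of_neg ha, Real.sign_of_neg hc]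
  · filter_upwards [hf.eventually_const_lt hc] with a ha
    rw [Real.sign_of_pos ha, Real.sign_of_pos hc]

theorem measurable_real_sign : Measurable Real.sign :=
  Measurable.ite measurableSet_Iio measurable_const
    (Measurable.ite measurableSet_Ioi measurable_const measurable_const)

end Sign

section ExponentialSums

variable {ι : Type*} [Fintype ι] {a : ι → ℝ} {k : ι}

theorem tendsto_sum_exp_neg_mul_sub_smul {E : Type*} [AddCommMonoid E] [TopologicalSpace E]
    [ContinuousAdd E] [Module ℝ E] [ContinuousSMul ℝ E] (w : ι → E) (ha : ∀ i, i ≠ k → a k < a i) :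
    Tendsto (fun t : ℝ => ∑ i, Real.exp (-(t * (a i - a k))) • w i) atTop (𝓝 (w k)) := by
  classical
  have tendsto_term (i : ι) : Tendsto (fun t : ℝ => Real.exp (-(t * (a i - a k))) • w i) atTop
      (𝓝 (if i = k then w i else 0)) := by
    split_ifs with hik
    · simpa [hik] using tendsto_const_nhds
    · have decay : Tendsto (fun t : ℝ => Real.exp (-(t * (a i - a k)))) atTop (𝓝 0) :=
        Real.tendsto_exp_neg_atTop_nhds_zero.comp
          (tendsto_id.atTop_mul_const (sub_pos.mpr (ha i hik)))
      simpa only [zero_smul] using decay.smul_const (w i)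
  simpa using tendsto_finsetSum Finset.univ fun i _ => tendsto_term i

theorem eventually_sign_sum_mul_exp_neg_eq {w : ι → ℝ} (ha : ∀ i, i ≠ k → a k < a i)
    (hw : w k ≠ 0) :
    ∀ᶠ t : ℝ in atTop, Real.sign (∑ i, w i * Real.exp (-(t * a i))) = Real.sign (w k) := by
  filter_upwards [eventually_sign_eq_of_tendsto (tendsto_sum_exp_neg_mul_sub_smul w ha) hw]
    with t ht
  have factor_out : ∑ i, w i * Real.exp (-(t * a i)) =
      Real.exp (-(t * a k)) * ∑ i, Real.exp (-(t * (a i - a k))) • w i := by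
    rw [Finset.mul_sum]
    refine Finset.sum_congr rfl fun i _ => ?_
    rw [smul_eq_mul, ← mul_assoc, ← Real.exp_add, mul_comm (w i)]
    ring_nf
  rw [factor_out, sign_mul_of_pos_left (Real.exp_pos _), ht]

end ExponentialSums

section Risk

variable {X Y : Type*} [MeasurableSpace X] [MeasurableSpace Y]

/-- The risk of the classifier `h` under the distribution `P` of labelled points: the probability
that `h` predicts a wrong label. -/
noncomputable def risk (P : Measure (X × Y)) (h : X → Y) : ℝ :=
  P.real {p | h p.1 ≠ p.2}

theorem tendsto_measure_of_ae_eventually_mem_iff {L : Type*} {l : Filter L}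
    [l.IsCountablyGenerated] {μ : Measure X} [IsFiniteMeasure μ] {s : L → Set X} {t : Set X}
    (hs : ∀ a, MeasurableSet (s a)) (hst : ∀ᵐ x ∂μ, ∀ᶠ a in l, x ∈ s a ↔ x ∈ t) :
    Tendsto (fun a => μ (s a)) l (𝓝 (μ t)) := by
  rcases l.eq_or_neBot with rfl | _
  · exact tendsto_bot
  have ht : NullMeasurableSet t μ :=
    nullMeasurableSet_of_tendsto_indicator l (fun a => (hs a).nullMeasurableSet) hst
  rw [← measure_toMeasurable t]
  refine tendsto_measure_of_ae_tendsto_indicator_of_isFiniteMeasure l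
    (measurableSet_toMeasurable μ t) hs ?_
  filter_upwards [hst, ht.toMeasurable_ae_eq.mem_iff] with x hx hxt
  simpa only [hxt] using hx

theorem tendsto_risk_of_ae_eventually_eq [MeasurableEq Y] {L : Type*} {l : Filter L}
    [l.IsCountablyGenerated] {P : Measure (X × Y)} [IsFiniteMeasure P] {h : L → X → Y} {g : X → Y}
    (hh : ∀ a, Measurable (h a)) (hhg : ∀ᵐ p ∂P, ∀ᶠ a in l, h a p.1 = g p.1) :
    Tendsto (fun a => risk P (h a)) l (𝓝 (risk P g)) := by
  have measurable_error (a : L) : MeasurableSet {p : X × Y | h a p.1 ≠ p.2} :=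
    (measurableSet_eq_fun ((hh a).comp measurable_fst) measurable_snd).compl
  refine (ENNReal.tendsto_toReal (measure_ne_top P _)).comp
    (tendsto_measure_of_ae_eventually_mem_iff measurable_error ?_)
  filter_upwards [hhg] with p hp
  filter_upwards [hp] with a ha
  simp only [ha]

end Risk

section Parzen

variable {X ι : Type*} [PseudoMetricSpace X] [Fintype ι]

/-- The Parzen-window classifier `ĥ_σ` with RBF kernel of bandwidth `σ`, for training points `x i`
with real labels `y i`. It takes the value `0` where the kernel sum vanishes. -/
noncomputable def parzenClassifier (x : ι → X) (y : ι → ℝ) (σ : ℝ) (z : X) : ℝ :=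
  Real.sign (∑ i, y i * Real.exp (-(dist z (x i)) ^ 2 / σ ^ 2))

theorem measurable_parzenClassifier [MeasurableSpace X] [OpensMeasurableSpace X] (x : ι → X)
    (y : ι → ℝ) (σ : ℝ) : Measurable (parzenClassifier x y σ) := by
  have kernel_sum_continuous :
      Continuous fun z => ∑ i, y i * Real.exp (-(dist z (x i)) ^ 2 / σ ^ 2) := by
    fun_prop
  exact measurable_real_sign.comp kernel_sum_continuous.measurable

theorem eventually_parzenClassifier_eq_sign {x : ι → X} {y : ι → ℝ} {z : X} {k : ι}
    (hk : ∀ i, i ≠ k → dist z (x k) < dist z (x i)) (hy : y k ≠ 0) :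
    ∀ᶠ σ in 𝓝[>] (0 : ℝ), parzenClassifier x y σ z = Real.sign (y k) := by
  have dist_sq_lt (i : ι) (hi : i ≠ k) : dist z (x k) ^ 2 < dist z (x i) ^ 2 :=
    pow_lt_pow_left₀ (hk i hi) dist_nonneg two_ne_zero
  have inv_sq_tendsto : Tendsto (fun σ : ℝ => σ⁻¹ ^ 2) (𝓝[>] 0) atTop :=
    (tendsto_pow_atTop two_ne_zero).comp tendsto_inv_nhdsGT_zero
  filter_upwards [inv_sq_tendsto.eventually (eventually_sign_sum_mul_exp_neg_eq
    (a := fun i => dist z (x i) ^ 2) dist_sq_lt hy)]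
    with σ hσ
  simpa only [parzenClassifier, inv_pow, inv_mul_eq_div, neg_div] using hσ

theorem parzen_risk_tendsto_one_nn_risk_general [MeasurableSpace X] [OpensMeasurableSpace X]
    (P : Measure (X × ℝ)) [IsFiniteMeasure P] (x : ι → X) (y : ι → ℝ) (hy : ∀ i, y i ≠ 0)
    (j : X → ι) (hj : ∀ᵐ p ∂P, ∀ i, i ≠ j p.1 → dist p.1 (x (j p.1)) < dist p.1 (x i)) :
    Tendsto (fun σ => risk P (parzenClassifier x y σ)) (𝓝[>] 0)
      (𝓝 (risk P fun z => Real.sign (y (j z)))) :=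
  tendsto_risk_of_ae_eventually_eq (measurable_parzenClassifier x y) <|
    hj.mono fun _ hp => eventually_parzenClassifier_eq_sign hp (hy _)

end Parzen

/-- Convergence of the risk of the Parzen-window classifier to the risk of 1-NN.
`P` is a probability measure on labelled points `(x, y) ∈ X × ℝ` (labels `±1`),
`j x0` is the index of the nearest training point to `x0` (assumed measurable), and
for `P`-almost every `(x0, y0)` the nearest training point is unique.  Then the risk of
the bandwidth-`σ` kernel classifier `x0 ↦ sign (∑ i, y i * exp (-(dist x0 (x i))²/σ²))`
converges, as `σ → 0⁺`, to the risk of the 1-NN classifier `x0 ↦ y (j x0)`. -/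
theorem parzen_risk_tendsto_one_nn_risk
    {X : Type*} [MetricSpace X] [MeasurableSpace X] [BorelSpace X]
    (P : Measure (X × ℝ)) [IsProbabilityMeasure P]
    (m : ℕ) (x : Fin m → X) (y : Fin m → ℝ) (hy : ∀ i, y i = -1 ∨ y i = 1)
    (j : X → Fin m) (hjm : Measurable j)
    (hj : ∀ᵐ p ∂P, ∀ i, i ≠ j p.1 → dist p.1 (x (j p.1)) < dist p.1 (x i)) :
    Tendsto (fun σ : ℝ =>
        (P {p : X × ℝ |
          Real.sign (∑ i, y i * Real.exp (-(dist p.1 (x i)) ^ 2 / σ ^ 2)) ≠ p.2}).toReal)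
      (nhdsWithin 0 (Set.Ioi 0))
      (nhds (P {p : X × ℝ | y (j p.1) ≠ p.2}).toReal) := by
  have sign_label (i : Fin m) : Real.sign (y i) = y i := by
    rcases hy i with h | h <;> simp [h, Real.sign_neg]
  have label_ne_zero (i : Fin m) : y i ≠ 0 := by
    rcases hy i with h | h <;> simp [h]
  simpa only [sign_label, risk, parzenClassifier, measureReal_def] using
    parzen_risk_tendsto_one_nn_risk_general P x y label_ne_zero j hj
end
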